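/- arXiv:1802.05303 — 4 statements merged into one kernel-verified Lean document; each statement's English description precedes it below -/
import Mathlib

section
/- Let N ⊆ [0,1] be a set of positive Lebesgue outer measure, and let Y = { Int.fract(x + q) : x ∈ N, q ∈ ℚ } be the set of fractional parts of rational translates of elements of N. Then the Lebesgue outer measure of Y equals 1. -/
open MeasureTheory Set

/-!
Since `ℤ ⊆ ℚ`, the set `Y` is `(N + ℚ) ∩ [0, 1)`. The set `N + ℚ` is `ℚ`-invariant, so its
measurable hull is `ℚ`-invariant up to null sets. The translations preserving a given measurable set
up to null sets form a closed subset of `ℝ`, so the hull is almost invariant under every real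
translation, hence null or conull by ergodicity of `ℝ` acting on itself. It contains `N`, so it is
conull, and `N + ℚ` meets every measurable set in full outer measure.
-/

section ClosedPreimage

open Filter
open scoped ENNReal Topology symmDiff

variable {X Y Z : Type*}
  [TopologicalSpace X] [MeasurableSpace X] [BorelSpace X] [R1Space X]
  [TopologicalSpace Y] [MeasurableSpace Y] [BorelSpace Y] [R1Space Y] [TopologicalSpace Z]
  {μ : Measure X} {ν : Measure Y} [μ.InnerRegularCompactLTTop] [IsLocallyFiniteMeasure ν]
  {f : Z → C(X, Y)}

theorem isClosed_setOfPred_preimage_ae_le_of_ne_top (hf : Continuous f)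
    (hfm : ∀ z, MeasurePreserving (f z) μ ν) (s : Set X) {t : Set Y}
    (htm : NullMeasurableSet t ν) (ht : ν t ≠ ∞) : IsClosed {z | f z ⁻¹' t ≤ᵐ[μ] s} := by
  refine isClosed_iff_frequently.2 fun z hz ↦ ae_le_set.2 ?_
  have htend : Tendsto (fun w ↦ μ ((f w ⁻¹' t) ∆ (f z ⁻¹' t))) (𝓝 z) (𝓝 0) :=
    tendsto_measure_symmDiff_preimage_nhds_zero (hf.tendsto z) (.of_forall hfm) (hfm z) htm ht
  refine le_antisymm (ge_of_tendsto_of_frequently htend (hz.mono fun w hw ↦ ?_)) zero_le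
  calc μ (f z ⁻¹' t \ s)
      ≤ μ ((f w ⁻¹' t) ∆ (f z ⁻¹' t) ∪ f w ⁻¹' t \ s) := measure_mono fun x hx ↦ by
        by_cases hxw : x ∈ f w ⁻¹' t
        · exact .inr ⟨hxw, hx.2⟩
        · exact .inl (.inr ⟨hx.1, hxw⟩)
    _ ≤ μ ((f w ⁻¹' t) ∆ (f z ⁻¹' t)) + μ (f w ⁻¹' t \ s) := measure_union_le _ _
    _ = μ ((f w ⁻¹' t) ∆ (f z ⁻¹' t)) := by rw [ae_le_set.1 hw, add_zero]

variable [SigmaFinite ν]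

theorem isClosed_setOfPred_preimage_ae_le (hf : Continuous f)
    (hfm : ∀ z, MeasurePreserving (f z) μ ν) (s : Set X) {t : Set Y}
    (htm : NullMeasurableSet t ν) : IsClosed {z | f z ⁻¹' t ≤ᵐ[μ] s} := by
  have hexhaust : {z | f z ⁻¹' t ≤ᵐ[μ] s} =
      ⋂ n, {z | f z ⁻¹' (t ∩ spanningSets ν n) ≤ᵐ[μ] s} := by
    ext z
    have ht : t = ⋃ n, t ∩ spanningSets ν n := by
      rw [← inter_iUnion, iUnion_spanningSets, inter_univ]
    conv_lhs => rw [ht]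
    simp only [mem_iInter, mem_ofPred, ae_le_set, preimage_iUnion, iUnion_sdiff,
      measure_iUnion_null_iff]
  rw [hexhaust]
  exact isClosed_iInter fun n ↦ isClosed_setOfPred_preimage_ae_le_of_ne_top hf hfm s
    (htm.inter (measurableSet_spanningSets ν n).nullMeasurableSet)
    (measure_ne_top_of_subset inter_subset_right (measure_spanningSets_lt_top ν n).ne)

theorem isClosed_setOfPred_preimage_ae_eq_of_sigmaFinite (hf : Continuous f)
    (hfm : ∀ z, MeasurePreserving (f z) μ ν) (s : Set X) {t : Set Y}
    (htm : NullMeasurableSet t ν) : IsClosed {z | f z ⁻¹' t =ᵐ[μ] s} := by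
  convert! (isClosed_setOfPred_preimage_ae_le hf hfm s htm).inter
    (isClosed_setOfPred_preimage_ae_le hf hfm sᶜ htm.compl) using 1
  ext z
  simp only [mem_inter_iff, mem_ofPred, preimage_compl]
  exact ⟨fun h ↦ ⟨h.le, h.compl.le⟩, fun h ↦ h.1.antisymm (by simpa using h.2.compl)⟩

end ClosedPreimage

section Ergodic

@[to_additive]
theorem ergodicSMul_of_dense_subgroup {G X : Type*} [Group G] [TopologicalSpace G]
    [TopologicalSpace X] [R1Space X] [MeasurableSpace X] [BorelSpace X]
    [MulAction G X] [ContinuousSMul G X] {μ : Measure X} [SigmaFinite μ]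
    [IsLocallyFiniteMeasure μ] [μ.InnerRegularCompactLTTop] [ErgodicSMul G X μ]
    {D : Subgroup G} (hD : Dense (D : Set G)) : ErgodicSMul D X μ where
  measure_preimage_smul d s _ := measure_preimage_smul μ (d : G) s
  aeconst_of_forall_preimage_smul_ae_eq {s} hs hDs := by
    let f : C(G × X, X) := ⟨fun p ↦ p.1 • p.2, continuous_smul⟩
    have hclosed : IsClosed {g : G | (g • ·) ⁻¹' s =ᵐ[μ] s} :=
      isClosed_setOfPred_preimage_ae_eq_of_sigmaFinite f.curry.continuous
        (measurePreserving_smul · μ) s hs.nullMeasurableSet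
    exact aeconst_of_forall_preimage_smul_ae_eq G hs.nullMeasurableSet fun g ↦
      hclosed.closure_subset_iff.2 (fun d hd ↦ hDs ⟨d, hd⟩) (hD g)

theorem toMeasurable_ae_le_of_subset {α : Type*} [MeasurableSpace α] {μ : Measure α} [SFinite μ]
    {s t : Set α} (hst : s ⊆ t) (ht : MeasurableSet t) : toMeasurable μ s ≤ᵐ[μ] t := by
  rw [ae_le_set, sdiff_eq, Measure.measure_toMeasurable_inter_of_sFinite ht.compl, ← sdiff_eq,
    sdiff_eq_empty.2 hst, measure_empty]

variable {G α : Type*} [Group G] [MeasurableSpace α] [MulAction G α] [MeasurableConstSMul G α]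
  {μ : Measure α} [SFinite μ] {s : Set α}

@[to_additive]
theorem preimage_smul_toMeasurable_ae_eq [SMulInvariantMeasure G α μ]
    (hs : ∀ g : G, ∀ x ∈ s, g • x ∈ s) (g : G) :
    (g • ·) ⁻¹' toMeasurable μ s =ᵐ[μ] toMeasurable μ s := by
  have hle (h : G) : toMeasurable μ s ≤ᵐ[μ] (h • ·) ⁻¹' toMeasurable μ s :=
    toMeasurable_ae_le_of_subset (fun x hx ↦ subset_toMeasurable μ s (hs h x hx))
      (measurable_const_smul h (measurableSet_toMeasurable μ s))
  refine Filter.EventuallyLE.antisymm ?_ (hle g)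
  simpa [preimage_preimage] using
    (measurePreserving_smul g μ).quasiMeasurePreserving.preimage_mono_ae (hle g⁻¹)

@[to_additive]
theorem measure_inter_eq_of_forall_smul_mem [ErgodicSMul G α μ]
    (hs : ∀ g : G, ∀ x ∈ s, g • x ∈ s) (hpos : μ s ≠ 0) {t : Set α} (ht : MeasurableSet t) :
    μ (s ∩ t) = μ t := by
  have hconst : Filter.EventuallyConst (toMeasurable μ s) (ae μ) :=
    aeconst_of_forall_preimage_smul_ae_eq G (measurableSet_toMeasurable μ s).nullMeasurableSet
      (preimage_smul_toMeasurable_ae_eq hs)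
  rcases Filter.eventuallyConst_set'.1 hconst with hnull | hfull
  · exact absurd ((measure_toMeasurable s).symm.trans (ae_eq_empty.1 hnull)) hpos
  · calc μ (s ∩ t) = μ (toMeasurable μ s ∩ t) :=
          (Measure.measure_toMeasurable_inter_of_sFinite ht s).symm
      _ = μ (univ ∩ t) := measure_congr (hfull.inter (ae_eq_refl t))
      _ = μ t := by rw [univ_inter]

end Ergodic

section Fract

open scoped Pointwise

theorem image_fract_eq_inter_Ico {R : Type*} [Ring R] [LinearOrder R] [IsStrictOrderedRing R]
    [FloorRing R] {A : Set R} (hA : ∀ n : ℤ, ∀ y ∈ A, n + y ∈ A) :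
    Int.fract '' A = A ∩ Ico 0 1 := by
  ext y
  constructor
  · rintro ⟨a, ha, rfl⟩
    refine ⟨?_, Int.fract_nonneg a, Int.fract_lt_one a⟩
    simpa [Int.fract, sub_eq_neg_add] using hA (-⌊a⌋) a ha
  · rintro ⟨hy, hy01⟩
    exact ⟨y, hy, Int.fract_eq_self.2 hy01⟩

theorem volume_image_fract_add_eq_one {D : AddSubgroup ℝ} (hD : Dense (D : Set ℝ)) (h1 : 1 ∈ D)
    {N : Set ℝ} (hN : volume N ≠ 0) : volume (Int.fract '' (N + (D : Set ℝ))) = 1 := by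
  have : ErgodicVAdd D ℝ volume := ergodicVAdd_of_dense_addSubgroup hD
  have hinv : ∀ d ∈ D, ∀ y ∈ N + (D : Set ℝ), d + y ∈ N + (D : Set ℝ) := by
    rintro d hd _ ⟨x, hx, e, he, rfl⟩
    exact ⟨x, hx, d + e, D.add_mem hd he, add_left_comm x d e⟩
  have hint (n : ℤ) : (n : ℝ) ∈ D := by simpa using D.zsmul_mem h1 n
  have hpos : volume (N + (D : Set ℝ)) ≠ 0 :=
    mt (measure_mono_null (subset_add_left N D.zero_mem)) hN
  calc volume (Int.fract '' (N + (D : Set ℝ)))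
      = volume ((N + (D : Set ℝ)) ∩ Ico 0 1) := by
        rw [image_fract_eq_inter_Ico fun n ↦ hinv n (hint n)]
    _ = volume (Ico (0 : ℝ) 1) :=
        measure_inter_eq_of_forall_vadd_mem (G := D) (fun d ↦ hinv d d.2) hpos measurableSet_Ico
    _ = 1 := by simp

end Fract

theorem stmt_1_general (N : Set ℝ) (hpos : 0 < volume N) :
    volume {y : ℝ | ∃ x ∈ N, ∃ q : ℚ, y = Int.fract (x + (q : ℝ))} = 1 := by
  let D : AddSubgroup ℝ := (Rat.castHom ℝ).toAddMonoidHom.range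
  have hD : Dense (D : Set ℝ) := Rat.denseRange_cast (𝕜 := ℝ)
  convert volume_image_fract_add_eq_one hD ⟨1, Rat.cast_one⟩ hpos.ne' using 2
  ext y
  constructor
  · rintro ⟨x, hx, q, rfl⟩
    exact mem_image_of_mem _ (add_mem_add hx ⟨q, rfl⟩)
  · rintro ⟨_, ⟨x, hx, _, ⟨q, rfl⟩, rfl⟩, rfl⟩
    exact ⟨x, hx, q, rfl⟩

theorem stmt_1 (N : Set ℝ) (hN : N ⊆ Set.Icc 0 1) (hpos : 0 < volume N) :
    volume {y : ℝ | ∃ x ∈ N, ∃ q : ℚ, y = Int.fract (x + (q : ℝ))} = 1 :=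
  stmt_1_general N hpos
end

section
/- Assume there exists a set N ⊆ [0,1] of positive Lebesgue outer measure such that for every function g : N → ℕ^ℕ there exists h : ℕ → ℕ with g(x) ≤* h for all x ∈ N (i.e. non(N) < 𝔟). Let 𝒮 be a set of sequences F = ⟨f_n⟩_{n∈ℕ} of functions f_n : [0,1] → [0,1], let P be an arbitrary predicate assigning to each F ∈ 𝒮 and each set A ⊆ [0,1] a proposition P(F,A), and let o : 𝒮 → ([0,1] → ℕ^ℕ) be a function such that for every F ∈ 𝒮 and every A ⊆ [0,1], if the set {o(F)(x) : x ∈ A} is bounded in ℕ^ℕ then P(F,A) holds. Then for every F ∈ 𝒮 and every ε > 0 there exists A ⊆ [0,1] with m*(A) ≥ 1 − ε such that P(F,A) holds. -/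
open MeasureTheory Filter Set

/-- A set of functions `ℕ → ℕ` is bounded if a single `h : ℕ → ℕ` dominates
all of its members everywhere. -/
def BddNatFun (S : Set (ℕ → ℕ)) : Prop :=
  ∃ h : ℕ → ℕ, ∀ f ∈ S, ∀ n, f n ≤ h n

/-!
If `|N| < 𝔟` and `D` is a countable dense set of translations, then `|D + N| < 𝔟` as well, while
`D + N` has full outer measure as soon as `N` is not null: for measurable `t` of finite measure,
`g ↦ μ (N ∩ (-g + t))` is continuous, so if it vanishes on `D` it vanishes identically, and then
`μ t = 0` by Fubini. On `D + N` the values of `o F` are eventually dominated by a single `h`, so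
`D + N` is the increasing union of the sets on which `o F` is dominated everywhere by `h + k`.
Outer measure is continuous along increasing unions of arbitrary sets, hence one of the traces of
these sets on `[0, 1]` is as large as desired.
-/

open scoped Pointwise symmDiff

section BoundingNumber

variable {α β : Type*} {s : Set α}

/-- The set `s` has fewer than `𝔟` elements, `𝔟` being the bounding number: every family of
functions `ℕ → ℕ` indexed by `s` is bounded for eventual domination. The families are indexed by
the whole type, their values off `s` being irrelevant. -/
def IsBelowBoundingNumber (s : Set α) : Prop :=
  ∀ g : α → ℕ → ℕ, ∃ h : ℕ → ℕ, ∀ x ∈ s, g x ≤ᶠ[atTop] h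

theorem exists_forall_eventuallyLE_atTop {ι : Type*} [Countable ι] (f : ι → ℕ → ℕ) :
    ∃ h : ℕ → ℕ, ∀ i, f i ≤ᶠ[atTop] h := by
  cases isEmpty_or_nonempty ι with
  | inl _ => exact ⟨0, isEmptyElim⟩
  | inr _ =>
    obtain ⟨e, he⟩ := exists_surjective_nat ι
    refine ⟨fun n ↦ partialSups (fun j ↦ f (e j) n) n, he.forall.2 fun j ↦ ?_⟩
    filter_upwards [eventually_ge_atTop j] with n hjn
    exact le_partialSups_of_le (fun j ↦ f (e j) n) hjn

theorem exists_forall_le_add_of_eventuallyLE_atTop {f h : ℕ → ℕ} (hfh : f ≤ᶠ[atTop] h) :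
    ∃ k, ∀ n, f n ≤ h n + k := by
  obtain ⟨m, hm⟩ := eventually_atTop.1 hfh
  refine ⟨partialSups f m, fun n ↦ ?_⟩
  rcases le_total n m with hn | hn
  · exact le_add_left (le_partialSups_of_le f hn)
  · exact le_add_right (hm n hn)

namespace IsBelowBoundingNumber

theorem image (hs : IsBelowBoundingNumber s) (φ : α → β) : IsBelowBoundingNumber (φ '' s) := by
  intro g
  obtain ⟨h, hh⟩ := hs (g ∘ φ)
  exact ⟨h, forall_mem_image.2 hh⟩

theorem iUnion {ι : Type*} [Countable ι] {s : ι → Set α} (hs : ∀ i, IsBelowBoundingNumber (s i)) :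
    IsBelowBoundingNumber (⋃ i, s i) := by
  intro g
  choose h hh using fun i ↦ hs i g
  obtain ⟨H, hH⟩ := exists_forall_eventuallyLE_atTop h
  refine ⟨H, fun x hx ↦ ?_⟩
  obtain ⟨i, hxi⟩ := mem_iUnion.1 hx
  exact (hh i x hxi).trans (hH i)

theorem countable_add [Add α] {D : Set α} (hD : D.Countable) (hs : IsBelowBoundingNumber s) :
    IsBelowBoundingNumber (D + s) := by
  have := hD.to_subtype
  rw [← iUnion_add_left_image, biUnion_eq_iUnion]
  exact .iUnion fun d ↦ hs.image _

theorem mono {t : Set α} (ht : IsBelowBoundingNumber t) (hst : s ⊆ t) :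
    IsBelowBoundingNumber s := by
  intro g
  obtain ⟨h, hh⟩ := ht g
  exact ⟨h, fun x hx ↦ hh x (hst hx)⟩

theorem exists_bddNatFun_image_of_lt_measure [MeasurableSpace α] {μ : Measure α}
    (hs : IsBelowBoundingNumber s) (f : α → ℕ → ℕ) {c : ENNReal} (hc : c < μ s) :
    ∃ A ⊆ s, c < μ A ∧ BddNatFun (f '' A) := by
  obtain ⟨h, hh⟩ := hs f
  let A (k : ℕ) : Set α := {x ∈ s | ∀ n, f x n ≤ h n + k}
  have hA_mono : Monotone A := fun k l hkl x hx ↦ ⟨hx.1, fun n ↦ (hx.2 n).trans (by gcongr)⟩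
  have hsA : s ⊆ ⋃ k, A k := fun x hx ↦
    have ⟨k, hk⟩ := exists_forall_le_add_of_eventuallyLE_atTop (hh x hx)
    mem_iUnion.2 ⟨k, hx, hk⟩
  have hc_iSup : c < ⨆ k, μ (A k) := by
    rw [← hA_mono.measure_iUnion]
    exact hc.trans_le (measure_mono hsA)
  obtain ⟨k, hk⟩ := lt_iSup_iff.1 hc_iSup
  exact ⟨A k, sep_subset _ _, hk, (h · + k), forall_mem_image.2 fun x hx ↦ hx.2⟩

end IsBelowBoundingNumber

end BoundingNumber

theorem isClosed_setOfPred_measure_preimage_inter_eq_zero {X Y Z : Type*}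
    [TopologicalSpace X] [MeasurableSpace X] [BorelSpace X] [R1Space X]
    [TopologicalSpace Y] [MeasurableSpace Y] [BorelSpace Y] [R1Space Y] [TopologicalSpace Z]
    {μ : Measure X} {ν : Measure Y} [μ.InnerRegularCompactLTTop] [IsLocallyFiniteMeasure ν]
    {f : Z → C(X, Y)} (hf : Continuous f) (hfm : ∀ z, MeasurePreserving (f z) μ ν)
    (s : Set X) {t : Set Y} (ht : NullMeasurableSet t ν) (ht_top : ν t ≠ ⊤) :
    IsClosed {z | μ (f z ⁻¹' t ∩ s) = 0} := by
  rw [← isOpen_compl_iff, isOpen_iff_mem_nhds]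
  intro z hz
  have hlim := tendsto_measure_symmDiff_preimage_nhds_zero (hf.tendsto z) (.of_forall hfm) (hfm z)
    ht ht_top
  filter_upwards [hlim.eventually (gt_mem_nhds (pos_iff_ne_zero.2 hz))] with w hw hw_zero
  refine hw.not_ge ?_
  calc
    μ (f z ⁻¹' t ∩ s) ≤ μ ((f w ⁻¹' t) ∆ (f z ⁻¹' t) ∪ f w ⁻¹' t ∩ s) := by
      refine measure_mono fun x hx ↦ ?_
      by_cases hxw : x ∈ f w ⁻¹' t
      · exact .inr ⟨hxw, hx.2⟩
      · exact .inl (.inr ⟨hx.1, hxw⟩)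
    _ ≤ μ ((f w ⁻¹' t) ∆ (f z ⁻¹' t)) + μ (f w ⁻¹' t ∩ s) := measure_union_le _ _
    _ = μ ((f w ⁻¹' t) ∆ (f z ⁻¹' t)) := by rw [hw_zero, add_zero]

theorem measure_eq_zero_of_forall_measure_preimage_add_inter_eq_zero {G : Type*} [AddGroup G]
    [MeasurableSpace G] [MeasurableAdd₂ G] [MeasurableNeg G] {μ : Measure G} [SFinite μ]
    [μ.IsAddLeftInvariant] {s t : Set G} (hs : μ s ≠ 0) (ht : MeasurableSet t)
    (hst : ∀ g, μ ((g + ·) ⁻¹' t ∩ s) = 0) : μ t = 0 := by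
  let S := toMeasurable μ s
  have hS : MeasurableSet S := measurableSet_toMeasurable μ s
  have hS_freq : ∃ᵐ y ∂μ, y ∈ S := by
    rwa [frequently_ae_mem_iff, measure_toMeasurable]
  have hS_null (g : G) : μ (S ∩ (g + ·) ⁻¹' t) = 0 := by
    rw [Measure.measure_toMeasurable_inter_of_sFinite (measurable_const_add g ht), inter_comm, hst]
  have hS_ae (g : G) : ∀ᵐ y ∂μ, ¬(y ∈ S ∧ g + y ∈ t) :=
    measure_eq_zero_iff_ae_notMem.1 (hS_null g)
  have hmeas : MeasurableSet {p : G × G | ¬(p.2 ∈ S ∧ p.1 + p.2 ∈ t)} :=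
    ((measurable_snd hS).inter (measurable_add ht)).compl
  have hae : ∀ᵐ y ∂μ, ∀ᵐ g ∂μ, ¬(y ∈ S ∧ g + y ∈ t) :=
    (Measure.ae_ae_comm hmeas).1 (.of_forall hS_ae)
  obtain ⟨y, hyS, hy⟩ := (hS_freq.and_eventually hae).exists
  rw [← measure_add_right_null μ y]
  exact measure_eq_zero_iff_ae_notMem.2 (hy.mono fun g hg hgt ↦ hg ⟨hyS, hgt⟩)

section DenseTranslates

variable {G : Type*} [AddGroup G] [TopologicalSpace G] [IsTopologicalAddGroup G]
  [SecondCountableTopology G] [MeasurableSpace G] [BorelSpace G] {μ : Measure G}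
  [IsLocallyFiniteMeasure μ] [μ.InnerRegularCompactLTTop] [μ.IsAddLeftInvariant]

theorem measure_eq_zero_of_disjoint_dense_add {D s t : Set G} (hD : Dense D) (hs : μ s ≠ 0)
    (ht : MeasurableSet t) (hdisj : Disjoint (D + s) t) : μ t = 0 := by
  by_contra ht_ne
  obtain ⟨u, hu, hut, hu_pos, hu_top⟩ :=
    Measure.exists_subset_measure_lt_top ht (pos_iff_ne_zero.2 ht_ne)
  let f : C(G × G, G) := ⟨fun p ↦ p.1 + p.2, continuous_add⟩
  have hclosed : IsClosed {g | μ ((g + ·) ⁻¹' u ∩ s) = 0} :=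
    isClosed_setOfPred_measure_preimage_inter_eq_zero f.curry.continuous
      (measurePreserving_add_left μ) s hu.nullMeasurableSet hu_top.ne
  have hD_sub : D ⊆ {g | μ ((g + ·) ⁻¹' u ∩ s) = 0} := by
    intro d hd
    have hempty : (d + ·) ⁻¹' u ∩ s = ∅ := eq_empty_of_forall_notMem fun x hx ↦
      disjoint_left.1 hdisj (add_mem_add hd hx.2) (hut hx.1)
    rw [mem_ofPred, hempty, measure_empty]
  have hall (g : G) : μ ((g + ·) ⁻¹' u ∩ s) = 0 := hclosed.closure_subset_iff.2 hD_sub (hD g)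
  exact hu_pos.ne' (measure_eq_zero_of_forall_measure_preimage_add_inter_eq_zero hs hu hall)

theorem measure_dense_add_inter {D s t : Set G} (hD : Dense D) (hs : μ s ≠ 0)
    (ht : MeasurableSet t) : μ ((D + s) ∩ t) = μ t := by
  refine (measure_mono inter_subset_right).antisymm ?_
  let B := toMeasurable μ ((D + s) ∩ t)
  have hdiff : μ (t \ B) = 0 := by
    refine measure_eq_zero_of_disjoint_dense_add hD hs
      (ht.diff (measurableSet_toMeasurable _ _)) (disjoint_left.2 fun x hx hxt ↦ ?_)
    exact hxt.2 (subset_toMeasurable _ _ ⟨hx, hxt.1⟩)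
  calc
    μ t ≤ μ B := measure_mono_ae (ae_le_set.2 hdiff)
    _ = μ ((D + s) ∩ t) := measure_toMeasurable _

theorem stmt_3_general {ι : Type*} {N : Set G} (hN : μ N ≠ 0) (hN_lt : IsBelowBoundingNumber N)
    {T : Set G} (hT : MeasurableSet T) (𝒮 : Set ι) (P : ι → Set G → Prop) (o : ι → G → ℕ → ℕ)
    (ho : ∀ F ∈ 𝒮, ∀ A ⊆ T, BddNatFun (o F '' A) → P F A) :
    ∀ F ∈ 𝒮, ∀ c < μ T, ∃ A ⊆ T, c < μ A ∧ P F A := by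
  intro F hF c hc
  obtain ⟨D, hD_count, hD⟩ := TopologicalSpace.exists_countable_dense G
  rw [← measure_dense_add_inter hD hN hT] at hc
  have hlt : IsBelowBoundingNumber ((D + N) ∩ T) :=
    (hN_lt.countable_add hD_count).mono inter_subset_left
  obtain ⟨A, hA, hcA, hbdd⟩ := hlt.exists_bddNatFun_image_of_lt_measure (o F) hc
  have hAT : A ⊆ T := hA.trans inter_subset_right
  exact ⟨A, hAT, hcA, ho F hF A hAT hbdd⟩

end DenseTranslates

theorem stmt_3
    (hyp : ∃ N : Set ℝ, N ⊆ Set.Icc 0 1 ∧ 0 < volume N ∧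
      ∀ g : ℝ → ℕ → ℕ, ∃ h : ℕ → ℕ, ∀ x ∈ N, ∀ᶠ n in atTop, g x n ≤ h n)
    (𝒮 : Set (ℕ → ℝ → ℝ))
    (h𝒮 : ∀ F ∈ 𝒮, ∀ n : ℕ, ∀ x ∈ Set.Icc (0 : ℝ) 1, F n x ∈ Set.Icc (0 : ℝ) 1)
    (P : (ℕ → ℝ → ℝ) → Set ℝ → Prop)
    (o : (ℕ → ℝ → ℝ) → ℝ → ℕ → ℕ)
    (ho : ∀ F ∈ 𝒮, ∀ A ⊆ Set.Icc (0 : ℝ) 1, BddNatFun (o F '' A) → P F A) :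
    ∀ F ∈ 𝒮, ∀ ε : ℝ, 0 < ε →
      ∃ A ⊆ Set.Icc (0 : ℝ) 1, ENNReal.ofReal (1 - ε) ≤ volume A ∧ P F A := by
  obtain ⟨N, -, hN, hN_lt⟩ := hyp
  intro F hF ε hε
  obtain ⟨A, hA, hA_lt, hPA⟩ := stmt_3_general hN.ne' hN_lt measurableSet_Icc 𝒮 P o ho F hF
    (ENNReal.ofReal (1 - ε)) (by simpa using hε)
  exact ⟨A, hA, hA_lt.le, hPA⟩
end

section
/- Assume there exists a set N ⊆ [0,1] of positive Lebesgue outer measure such that for every function g : N → ℕ^ℕ there exists h : ℕ → ℕ with g(x) ≤* h for all x ∈ N (i.e. non(N) < 𝔟). Let φ be a lower semicontinuous submeasure on ℕ, let ε > 0, and let f_m : [0,1] → [0,1] be a sequence converging to 0 I-pointwise on [0,1], where I = Exh(φ). Then there exists A ⊆ [0,1] with m*(A) ≥ 1 − ε such that the sequence converges to 0 equi-ideally on A. -/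
open MeasureTheory Filter Set ENNReal

/-- A lower semicontinuous submeasure on `ℕ`. -/
def IsLSCSubmeasure (φ : Set ℕ → ℝ≥0∞) : Prop :=
  φ ∅ = 0 ∧ (∀ A B : Set ℕ, φ A ≤ φ (A ∪ B)) ∧
    (∀ A B : Set ℕ, φ (A ∪ B) ≤ φ A + φ B) ∧
    ∀ A : Set ℕ, Tendsto (fun n => φ (A ∩ Set.Iio n)) atTop (nhds (φ A))

/-- `f` converges to `0` `Exh(φ)`-pointwise on `A`. -/
def ExhPointwise (φ : Set ℕ → ℝ≥0∞) (f : ℕ → ℝ → ℝ) (A : Set ℝ) : Prop :=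
  ∀ δ : ℝ, 0 < δ → ∀ x ∈ A,
    ∃ k : ℕ, φ ({m | δ ≤ f m x} \ Set.Iio k) < ENNReal.ofReal δ

/-- `f` converges to `0` equi-ideally (w.r.t. `φ`) on `A`. -/
def ExhEqui (φ : Set ℕ → ℝ≥0∞) (f : ℕ → ℝ → ℝ) (A : Set ℝ) : Prop :=
  ∀ δ : ℝ, 0 < δ →
    ∃ k : ℕ, ∀ x ∈ A, φ ({m | δ ≤ f m x} \ Set.Iio k) < ENNReal.ofReal δ

/-!
Let `N` have positive outer measure and cardinality below `𝔟`, and let `T` be a countable dense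
set of reals. Then `T + N` still has cardinality below `𝔟`, and by Steinhaus' theorem it has full
outer measure in every measurable set. On `T + N` the moduli `k x n` of convergence at the scales
`1 / (n + 1)` are all eventually dominated by a single function `h`. As the sets
`{x | ∀ n ≥ j, k x n ≤ h n}` increase to `T + N` with `j`, continuity from below, which holds for
outer measures of non-measurable sets too, provides one of outer measure as large as desired; there
the domination starts at a common `j`, and convergence is equi-ideal.
-/

open scoped Pointwise Topology

section CardLTBounding

variable {α β ι : Type*}

theorem exists_forall_eventually_le [Countable ι] [SemilatticeSup β] [Nonempty β]
    (u : ι → ℕ → β) : ∃ v : ℕ → β, ∀ i, ∀ᶠ n in atTop, u i n ≤ v n := by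
  cases isEmpty_or_nonempty ι
  · exact ⟨fun _ => Classical.arbitrary β, isEmptyElim⟩
  obtain ⟨e, he⟩ := exists_surjective_nat ι
  refine ⟨fun n => partialSups (fun m => u (e m) n) n, he.forall.2 fun m => ?_⟩
  filter_upwards [eventually_ge_atTop m] with n hmn
  exact le_partialSups_of_le (fun m => u (e m) n) hmn

/-- The cardinality of `N` is smaller than the bounding number `𝔟`, expressed as: every family in
`ℕ → ℕ` indexed by `N` has an upper bound for eventual domination. Families are indexed by the
ambient type, their values off `N` being irrelevant. -/
def CardLTBounding (N : Set α) : Prop :=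
  ∀ g : α → ℕ → ℕ, ∃ h : ℕ → ℕ, ∀ x ∈ N, ∀ᶠ n in atTop, g x n ≤ h n

theorem CardLTBounding.image {N : Set α} (hN : CardLTBounding N) (F : α → β) :
    CardLTBounding (F '' N) := fun g => (hN (g ∘ F)).imp fun _ hg => forall_mem_image.2 hg

theorem CardLTBounding.biUnion {T : Set ι} (hT : T.Countable) {N : ι → Set α}
    (hN : ∀ t ∈ T, CardLTBounding (N t)) : CardLTBounding (⋃ t ∈ T, N t) := by
  intro g
  have := hT.to_subtype
  choose h hh using fun t : T => hN t t.2 g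
  obtain ⟨H, hH⟩ := exists_forall_eventually_le h
  refine ⟨H, fun x hx => ?_⟩
  obtain ⟨t, ht, hxt⟩ := mem_iUnion₂.1 hx
  filter_upwards [hh ⟨t, ht⟩ x hxt, hH ⟨t, ht⟩] with n hgh hhH using hgh.trans hhH

theorem CardLTBounding.countable_add [Add α] {T N : Set α} (hT : T.Countable)
    (hN : CardLTBounding N) : CardLTBounding (T + N) := by
  rw [← iUnion_add_left_image]
  exact .biUnion hT fun t _ => hN.image (t + ·)

theorem CardLTBounding.mono {M N : Set α} (hN : CardLTBounding N) (h : M ⊆ N) :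
    CardLTBounding M := fun g => (hN g).imp fun _ hg x hx => hg x (h hx)

end CardLTBounding

section Steinhaus

variable {G : Type*} [AddGroup G] [MeasurableSpace G]

theorem exists_measure_inter_preimage_add_left_ne_zero [MeasurableAdd₂ G] [MeasurableNeg G]
    {μ : Measure G} [SFinite μ] [μ.IsAddLeftInvariant] {A B : Set G}
    (hA : MeasurableSet A) (hB : MeasurableSet B) (hA₀ : μ A ≠ 0) (hB₀ : μ B ≠ 0) :
    ∃ g : G, μ (A ∩ (g + ·) ⁻¹' B) ≠ 0 := by
  by_contra! hnull
  have hae : ∀ᵐ g ∂μ, ∀ᵐ x ∂μ, ¬(x ∈ A ∧ g + x ∈ B) :=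
    ae_of_all _ fun g => measure_eq_zero_iff_ae_notMem.1 (hnull g)
  have hmeas : MeasurableSet {p : G × G | ¬(p.2 ∈ A ∧ p.1 + p.2 ∈ B)} :=
    ((measurable_snd hA).inter (measurable_add hB)).compl
  rw [Measure.ae_ae_comm hmeas] at hae
  obtain ⟨x, hxA, hx⟩ := Measure.exists_mem_of_measure_ne_zero_of_ae hA₀ (ae_restrict_of_ae hae)
  have hBx : μ ((· + x) ⁻¹' B) = 0 :=
    measure_eq_zero_iff_ae_notMem.2 (hx.mono fun g hg hgB => hg ⟨hxA, hgB⟩)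
  exact hB₀ ((measure_add_right_null μ x).1 hBx)

variable [TopologicalSpace G] [IsTopologicalAddGroup G] [LocallyCompactSpace G]
  [SecondCountableTopology G] [BorelSpace G] {μ : Measure G} [μ.IsAddHaarMeasure] [μ.InnerRegular]

theorem interior_sub_nonempty_of_addHaar_ne_zero {A B : Set G}
    (hA : MeasurableSet A) (hB : MeasurableSet B) (hA₀ : μ A ≠ 0) (hB₀ : μ B ≠ 0) :
    (interior (B - A)).Nonempty := by
  obtain ⟨g, hg⟩ := exists_measure_inter_preimage_add_left_ne_zero hA hB hA₀ hB₀
  set K := A ∩ (g + ·) ⁻¹' B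
  have hK : MeasurableSet K := hA.inter (measurable_const_add g hB)
  have hKK : K - K ∈ 𝓝 (0 : G) :=
    Measure.sub_mem_nhds_zero_of_addHaar_pos μ K hK (pos_iff_ne_zero.2 hg)
  have hsub : (g + ·) '' (K - K) ⊆ B - A := by
    rintro _ ⟨_, ⟨x, hx, y, hy, rfl⟩, rfl⟩
    exact ⟨g + x, hx.2, y, hy.1, add_sub_assoc g x y⟩
  refine ⟨g, mem_interior_iff_mem_nhds.2 (mem_of_superset ?_ hsub)⟩
  simpa only [Homeomorph.coe_addLeft, add_zero] using
    (Homeomorph.addLeft g).isOpenMap.image_mem_nhds hKK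

theorem measure_eq_zero_of_disjoint_dense_add_s8 {T A B : Set G} (hT : Dense T)
    (hA : MeasurableSet A) (hB : MeasurableSet B) (hA₀ : μ A ≠ 0) (hdisj : Disjoint (T + A) B) :
    μ B = 0 := by
  by_contra hB₀
  obtain ⟨t, ht, htT⟩ := hT.inter_open_nonempty _ isOpen_interior
    (interior_sub_nonempty_of_addHaar_ne_zero hA hB hA₀ hB₀)
  obtain ⟨b, hb, a, ha, rfl⟩ := interior_subset ht
  exact hdisj.notMem_of_mem_right hb ⟨b - a, htT, a, ha, sub_add_cancel b a⟩

theorem measure_dense_add_inter_s8 {T N S : Set G} (hTc : T.Countable) (hT : Dense T)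
    (hN : μ N ≠ 0) (hS : MeasurableSet S) : μ ((T + N) ∩ S) = μ S := by
  set H := toMeasurable μ (T + N)
  have hH : MeasurableSet H := measurableSet_toMeasurable μ _
  -- `E` is a measurable superset of `N` small enough that `T + E` stays inside `H`.
  set E := ⋂ t ∈ T, (t + ·) ⁻¹' H
  have hE : MeasurableSet E := .biInter hTc fun t _ => measurable_const_add t hH
  have hNE : N ⊆ E := fun x hx =>
    mem_iInter₂.2 fun t ht => subset_toMeasurable μ _ (add_mem_add ht hx)
  have hTE : T + E ⊆ H := add_subset_iff.2 fun t ht x hx => mem_iInter₂.1 hx t ht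
  have hHc : μ Hᶜ = 0 := measure_eq_zero_of_disjoint_dense_add_s8 hT hE hH.compl
    (ne_bot_of_le_ne_bot hN (measure_mono hNE)) (disjoint_compl_right.mono_left hTE)
  rw [← Measure.measure_toMeasurable_inter_of_sFinite hS, inter_comm, measure_inter_conull hHc]

end Steinhaus

theorem exists_subset_eventually_forall_of_lt_measure {α ι : Type*} [MeasurableSpace α]
    {μ : Measure α} [Preorder ι] [IsDirectedOrder ι] [Nonempty ι]
    [(atTop : Filter ι).IsCountablyGenerated] {M : Set α} {p : ι → α → Prop}
    (hp : ∀ x ∈ M, ∀ᶠ i in atTop, p i x) {c : ℝ≥0∞} (hc : c < μ M) :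
    ∃ A ⊆ M, c < μ A ∧ ∀ᶠ i in atTop, ∀ x ∈ A, p i x := by
  let B : ι → Set α := fun j => {x ∈ M | ∀ i ≥ j, p i x}
  have hB : Monotone B := fun j j' hjj' x hx => ⟨hx.1, fun i hi => hx.2 i (hjj'.trans hi)⟩
  have hBM : ⋃ j, B j = M := by
    refine (iUnion_subset fun j => sep_subset _ _).antisymm fun x hx => ?_
    obtain ⟨j, hj⟩ := eventually_atTop.1 (hp x hx)
    exact mem_iUnion.2 ⟨j, hx, hj⟩
  rw [← hBM, hB.measure_iUnion, lt_iSup_iff] at hc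
  obtain ⟨j, hj⟩ := hc
  exact ⟨B j, sep_subset _ _, hj, eventually_atTop.2 ⟨j, fun i hi x hx => hx.2 i hi⟩⟩

theorem IsLSCSubmeasure.monotone {φ : Set ℕ → ℝ≥0∞} (hφ : IsLSCSubmeasure φ) : Monotone φ :=
  fun A B hAB => (hφ.2.1 A B).trans_eq (congrArg φ (union_eq_right.2 hAB))

theorem exhEqui_of_frequently {φ : Set ℕ → ℝ≥0∞} (hφ : Monotone φ) {f : ℕ → ℝ → ℝ} {A : Set ℝ}
    {ι : Type*} {l : Filter ι} {u : ι → ℝ} (hu : Tendsto u l (𝓝 0))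
    (h : ∃ᶠ i in l, ∃ k : ℕ, ∀ x ∈ A, φ ({m | u i ≤ f m x} \ Iio k) < ENNReal.ofReal (u i)) :
    ExhEqui φ f A := by
  intro δ hδ
  obtain ⟨i, ⟨k, hk⟩, hi⟩ := (h.and_eventually (hu.eventually_lt_const hδ)).exists
  refine ⟨k, fun x hx => ?_⟩
  calc φ ({m | δ ≤ f m x} \ Iio k)
      ≤ φ ({m | u i ≤ f m x} \ Iio k) := hφ (sdiff_subset_sdiff_left fun m => hi.le.trans)
    _ < ENNReal.ofReal (u i) := hk x hx
    _ ≤ ENNReal.ofReal δ := ENNReal.ofReal_le_ofReal hi.le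

theorem ExhPointwise.exists_subset_exhEqui {φ : Set ℕ → ℝ≥0∞} (hφ : Monotone φ)
    {f : ℕ → ℝ → ℝ} {M : Set ℝ} (hf : ExhPointwise φ f M) (hM : CardLTBounding M)
    {μ : Measure ℝ} {c : ℝ≥0∞} (hc : c < μ M) : ∃ A ⊆ M, c < μ A ∧ ExhEqui φ f A := by
  let u : ℕ → ℝ := fun n => 1 / ((n : ℝ) + 1)
  have hmod : ∀ x ∈ M, ∀ n, ∃ k : ℕ, φ ({m | u n ≤ f m x} \ Iio k) < ENNReal.ofReal (u n) :=
    fun x hx n => hf (u n) Nat.one_div_pos_of_nat x hx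
  choose! k hk using hmod
  obtain ⟨h, hkh⟩ := hM k
  obtain ⟨A, hAM, hA, hkA⟩ := exists_subset_eventually_forall_of_lt_measure hkh hc
  refine ⟨A, hAM, hA, exhEqui_of_frequently hφ tendsto_one_div_add_atTop_nhds_zero_nat
    (hkA.mono fun n hn => ⟨h n, fun x hx => ?_⟩).frequently⟩
  calc φ ({m | u n ≤ f m x} \ Iio (h n))
      ≤ φ ({m | u n ≤ f m x} \ Iio (k x n)) :=
        hφ (sdiff_subset_sdiff_right (Iio_subset_Iio (hn x hx)))
    _ < ENNReal.ofReal (u n) := hk x (hAM hx) n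

theorem stmt_8_general {N : Set ℝ} (hNpos : volume N ≠ 0) (hN : CardLTBounding N)
    {φ : Set ℕ → ℝ≥0∞} (hφ : Monotone φ) {f : ℕ → ℝ → ℝ} {S : Set ℝ} (hS : MeasurableSet S)
    (hf : ExhPointwise φ f S) {c : ℝ≥0∞} (hc : c < volume S) :
    ∃ A ⊆ S, c < volume A ∧ ExhEqui φ f A := by
  obtain ⟨T, hTc, hT⟩ := TopologicalSpace.exists_countable_dense ℝ
  have hM : CardLTBounding ((T + N) ∩ S) := (hN.countable_add hTc).mono inter_subset_left
  have hfM : ExhPointwise φ f ((T + N) ∩ S) := fun δ hδ x hx => hf δ hδ x hx.2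
  rw [← measure_dense_add_inter_s8 hTc hT hNpos hS] at hc
  obtain ⟨A, hAM, hA, hfA⟩ := hfM.exists_subset_exhEqui hφ hM hc
  exact ⟨A, hAM.trans inter_subset_right, hA, hfA⟩

theorem stmt_8
    (hyp : ∃ N : Set ℝ, N ⊆ Set.Icc 0 1 ∧ 0 < volume N ∧
      ∀ g : ℝ → ℕ → ℕ, ∃ h : ℕ → ℕ, ∀ x ∈ N, ∀ᶠ n in atTop, g x n ≤ h n)
    (φ : Set ℕ → ℝ≥0∞) (hφ : IsLSCSubmeasure φ)
    (ε : ℝ) (hε : 0 < ε)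
    (f : ℕ → ℝ → ℝ)
    (hmaps : ∀ m : ℕ, ∀ x ∈ Set.Icc (0 : ℝ) 1, f m x ∈ Set.Icc (0 : ℝ) 1)
    (hconv : ExhPointwise φ f (Set.Icc 0 1)) :
    ∃ A ⊆ Set.Icc (0 : ℝ) 1, ENNReal.ofReal (1 - ε) ≤ volume A ∧
      ExhEqui φ f A := by
  obtain ⟨N, -, hNpos, hN⟩ := hyp
  have hlt : ENNReal.ofReal (1 - ε) < volume (Icc (0 : ℝ) 1) := by simp [hε]
  obtain ⟨A, hAI, hA, hfA⟩ :=
    stmt_8_general hNpos.ne' hN hφ.monotone measurableSet_Icc hconv hlt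
  exact ⟨A, hAI, hA.le, hfA⟩
end

section
/- Assume that every subset of ℝ of cardinality less than the continuum is Lebesgue-null (i.e. non(N) = 𝔠), and that there exists a set Z ⊆ ℕ^ℕ of cardinality continuum such that every meagre subset of Z has cardinality less than the continuum (a 𝔠-Lusin set). Let C : ℕ → 𝒫(ℕ) be a nondecreasing sequence of subsets of ℕ with C_{i+1} \ C_i ≠ ∅ for every i, generating the ideal I = {A ⊆ ℕ : A ⊆ C_k for some k}. Then there exist a sequence f_n : [0,1] → [0,1] converging to 0 I-pointwise on [0,1], and ε > 0, such that for every A ⊆ [0,1] with m*(A) ≥ 1 − ε, the sequence does not converge to 0 I-uniformly on A. -/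
open MeasureTheory Filter Set

/-- `f` converges to `0` `I`-pointwise on `A`, where `I` is the ideal
generated by the nondecreasing sequence `C`. -/
def CgPointwise (C : ℕ → Set ℕ) (f : ℕ → ℝ → ℝ) (A : Set ℝ) : Prop :=
  ∀ δ : ℝ, 0 < δ → ∀ x ∈ A, ∃ k : ℕ, {n | δ ≤ f n x} ⊆ C k

/-- `f` converges to `0` `I`-uniformly on `A`, where `I` is the ideal
generated by the nondecreasing sequence `C`. -/
def CgUniform (C : ℕ → Set ℕ) (f : ℕ → ℝ → ℝ) (A : Set ℝ) : Prop :=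
  ∀ δ : ℝ, 0 < δ → ∃ k : ℕ, ∀ x ∈ A, {n | δ ≤ f n x} ⊆ C k

/-!
Pick `p i ∈ C (i + 1) \ C i` and let `f n x` be `1 / (m + 1)` for the least `m` with
`p (z x m) = n`, where `z` assigns to each real `x` a point of Baire space. Uniform convergence of
`f` on `A` then says exactly that `z '' A` is bounded, and pointwise convergence is uniform
convergence on singletons. Bounded sets are meagre in Baire space, so if `z` is a bijection onto a
Lusin set, then `f` converges uniformly only on sets of cardinality less than the continuum, which
are null.
-/

theorem cgPointwise_iff_forall_cgUniform_singleton {C : ℕ → Set ℕ} {f : ℕ → ℝ → ℝ} {A : Set ℝ} :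
    CgPointwise C f A ↔ ∀ x ∈ A, CgUniform C f {x} := by
  simp only [CgPointwise, CgUniform, mem_singleton_iff, forall_eq]
  exact ⟨fun h x hx δ hδ => h δ hδ x hx, fun h δ hδ x hx => h x hx δ hδ⟩

theorem tendsto_update_cofinite {ι : Type*} [DecidableEq ι] {α : ι → Type*}
    [∀ i, TopologicalSpace (α i)] (z b : ∀ i, α i) :
    Tendsto (fun i => Function.update z i (b i)) cofinite (nhds z) := by
  refine tendsto_pi_nhds.2 fun j => tendsto_const_nhds.congr' ?_
  filter_upwards [eventually_cofinite_ne j] with i hi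
  rw [Function.update_of_ne hi.symm]

theorem isNowhereDense_Iic_pi {ι : Type*} [Infinite ι] {α : ι → Type*}
    [∀ i, TopologicalSpace (α i)] [∀ i, Preorder (α i)] [∀ i, ClosedIicTopology (α i)]
    [∀ i, NoTopOrder (α i)] (h : ∀ i, α i) : IsNowhereDense (Iic h) := by
  classical
  have hclosed : IsClosed (Iic h) := by
    rw [← pi_univ_Iic]
    exact isClosed_set_pi fun _ _ => isClosed_Iic
  rw [hclosed.isNowhereDense_iff, eq_empty_iff_forall_notMem]
  intro z hz
  choose b hb using fun i => exists_not_le (h i)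
  obtain ⟨i, hi⟩ :=
    ((tendsto_update_cofinite z b).eventually (mem_interior_iff_mem_nhds.1 hz)).exists
  exact hb i (by simpa only [Function.update_self] using hi i)

theorem BddNatFun.isMeagre {S : Set (ℕ → ℕ)} (hS : BddNatFun S) : IsMeagre S :=
  let ⟨h, hh⟩ := hS
  (isNowhereDense_Iic_pi h).isMeagre.mono hh

theorem bddNatFun_singleton (g : ℕ → ℕ) : BddNatFun {g} :=
  ⟨g, fun _ hf n => (congrFun hf n).le⟩

/-- The value `1 / (m + 1)`, where `m` is the first index with `u m = a`, and `0` if the sequence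
`u` never takes the value `a`. -/
noncomputable def firstHitWeight {α : Type*} (u : ℕ → α) : α → ℝ :=
  (range u).indicator fun a => 1 / ((sInf (u ⁻¹' {a}) : ℕ) + 1)

theorem firstHitWeight_mem_Icc {α : Type*} (u : ℕ → α) (a : α) :
    firstHitWeight u a ∈ Icc (0 : ℝ) 1 :=
  ⟨indicator_nonneg (fun _ _ => by positivity) a,
    indicator_apply_le' (fun _ => div_le_one_of_le₀ (by simp) (by positivity))
      fun _ => zero_le_one⟩

theorem setOf_le_firstHitWeight_eq_image {α : Type*} (u : ℕ → α) {δ : ℝ} (hδ : 0 < δ) :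
    {a | δ ≤ firstHitWeight u a} = u '' {m | δ ≤ 1 / ((m : ℝ) + 1)} := by
  ext a
  constructor
  · intro (h : δ ≤ firstHitWeight u a)
    have ha : a ∈ range u := mem_of_indicator_ne_zero (hδ.trans_le h).ne'
    rw [firstHitWeight, indicator_of_mem ha] at h
    exact ⟨_, h, Nat.sInf_mem (s := u ⁻¹' {a}) ha⟩
  · rintro ⟨m, hm : δ ≤ 1 / ((m : ℝ) + 1), rfl⟩
    change δ ≤ firstHitWeight u (u m)
    rw [firstHitWeight, indicator_of_mem (mem_range_self m)]
    exact hm.trans (Nat.one_div_le_one_div (Nat.sInf_le rfl))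

theorem exists_forall_mem_iff_lt {α : Type*} {C : ℕ → Set α} (hC : Monotone C)
    (hCne : ∀ i, (C (i + 1) \ C i).Nonempty) : ∃ p : ℕ → α, ∀ i k, p i ∈ C k ↔ i < k := by
  choose p hp using hCne
  refine ⟨p, fun i k => ⟨fun hik => ?_, fun hik => hC hik (hp i).1⟩⟩
  exact not_le.1 fun hki => (hp i).2 (hC hki hik)

theorem cgUniform_firstHitWeight_iff {C : ℕ → Set ℕ} {p : ℕ → ℕ}
    (hp : ∀ i k, p i ∈ C k ↔ i < k) (z : ℝ → ℕ → ℕ) (A : Set ℝ) :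
    CgUniform C (fun n x => firstHitWeight (p ∘ z x) n) A ↔ BddNatFun (z '' A) := by
  have level_subset_iff {δ : ℝ} (hδ : 0 < δ) (x : ℝ) (k : ℕ) :
      {n | δ ≤ firstHitWeight (p ∘ z x) n} ⊆ C k ↔ ∀ m : ℕ, δ ≤ 1 / (m + 1) → z x m < k := by
    rw [setOf_le_firstHitWeight_eq_image _ hδ, image_subset_iff]
    exact forall₂_congr fun m _ => hp (z x m) k
  constructor
  · intro hunif
    choose h hh using fun m : ℕ => hunif (1 / (m + 1)) Nat.one_div_pos_of_nat
    refine ⟨h, forall_mem_image.2 fun x hx m => ?_⟩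
    exact ((level_subset_iff Nat.one_div_pos_of_nat x _).1 (hh m x hx) m le_rfl).le
  · rintro ⟨h, hh⟩ δ hδ
    obtain ⟨N, hN⟩ := exists_nat_one_div_lt hδ
    refine ⟨(Finset.range N).sup h + 1, fun x hx => (level_subset_iff hδ x _).2 fun m hm => ?_⟩
    have hmN : m < N := by
      by_contra! hNm
      exact (hm.trans (Nat.one_div_le_one_div hNm)).not_gt hN
    exact Nat.lt_succ_of_le <|
      (hh _ (mem_image_of_mem z hx) m).trans (Finset.le_sup (Finset.mem_range.2 hmN))

theorem exists_cgPointwise_forall_cgUniform_iff_bddNatFun_image {C : ℕ → Set ℕ} (hC : Monotone C)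
    (hCne : ∀ i, (C (i + 1) \ C i).Nonempty) (z : ℝ → ℕ → ℕ) :
    ∃ f : ℕ → ℝ → ℝ, (∀ n x, f n x ∈ Icc (0 : ℝ) 1) ∧ CgPointwise C f univ ∧
      ∀ A, CgUniform C f A ↔ BddNatFun (z '' A) := by
  obtain ⟨p, hp⟩ := exists_forall_mem_iff_lt hC hCne
  have hunif := cgUniform_firstHitWeight_iff hp z
  refine ⟨_, fun n x => firstHitWeight_mem_Icc (p ∘ z x) n, ?_, hunif⟩
  refine cgPointwise_iff_forall_cgUniform_singleton.2 fun x _ => (hunif {x}).2 ?_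
  rw [image_singleton]
  exact bddNatFun_singleton (z x)

theorem stmt_14_general {μ : Measure ℝ}
    (hnon : ∀ s : Set ℝ, Cardinal.mk s < Cardinal.continuum → μ s = 0)
    (hZ : ∃ Z : Set (ℕ → ℕ), Cardinal.mk Z = Cardinal.continuum ∧
      ∀ S ⊆ Z, BddNatFun S → Cardinal.mk S < Cardinal.continuum)
    {C : ℕ → Set ℕ} (hC : Monotone C) (hCne : ∀ i, (C (i + 1) \ C i).Nonempty) :
    ∃ f : ℕ → ℝ → ℝ, (∀ n x, f n x ∈ Icc (0 : ℝ) 1) ∧ CgPointwise C f univ ∧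
      ∀ A, μ A ≠ 0 → ¬ CgUniform C f A := by
  obtain ⟨Z, hcard, hsmall⟩ := hZ
  obtain ⟨e⟩ : Nonempty (ℝ ≃ Z) := Cardinal.eq.1 (Cardinal.mk_real.trans hcard.symm)
  obtain ⟨f, hf, hpointwise, hunif⟩ :=
    exists_cgPointwise_forall_cgUniform_iff_bddNatFun_image hC hCne (fun x => e x)
  refine ⟨f, hf, hpointwise, fun A hA hfA => hA (hnon A ?_)⟩
  rw [← Cardinal.mk_image_eq (Subtype.val_injective.comp e.injective)]
  exact hsmall _ (image_subset_iff.2 fun x _ => (e x).2) ((hunif A).1 hfA)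

theorem stmt_14
    (hnon : ∀ s : Set ℝ, Cardinal.mk s < Cardinal.continuum → volume s = 0)
    (hLusin : ∃ Z : Set (ℕ → ℕ), Cardinal.mk Z = Cardinal.continuum ∧
      ∀ M ⊆ Z, IsMeagre M → Cardinal.mk M < Cardinal.continuum)
    (C : ℕ → Set ℕ) (hC : Monotone C)
    (hCne : ∀ i : ℕ, (C (i + 1) \ C i).Nonempty) :
    ∃ f : ℕ → ℝ → ℝ,
      (∀ n : ℕ, ∀ x ∈ Set.Icc (0 : ℝ) 1, f n x ∈ Set.Icc (0 : ℝ) 1) ∧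
      CgPointwise C f (Set.Icc 0 1) ∧
      ∃ ε : ℝ, 0 < ε ∧
        ∀ A ⊆ Set.Icc (0 : ℝ) 1, ENNReal.ofReal (1 - ε) ≤ volume A →
          ¬ CgUniform C f A := by
  obtain ⟨f, hf, hpointwise, hunif⟩ := stmt_14_general hnon
    (hLusin.imp fun _ hZ => ⟨hZ.1, fun S hS hbdd => hZ.2 S hS hbdd.isMeagre⟩) hC hCne
  refine ⟨f, fun n x _ => hf n x, fun δ hδ x _ => hpointwise δ hδ x (mem_univ x),
    1 / 2, by norm_num, fun A _ hA => hunif A ?_⟩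
  exact ((ENNReal.ofReal_pos.2 (by norm_num)).trans_le hA).ne'
end
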